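/- arXiv:1304.0203 — 3 statements merged into one kernel-verified Lean document; each statement's English description precedes it below -/
import Mathlib

section
/- Define u_n by the recurrence (n+1)^2 u_{n+1} = (2n+1)^2 u_n + (13n^2+2) u_{n-1} + (9n^2-9n+3) u_{n-2} + (n-1)^2 u_{n-3} with u_0 = 1 and u_{-1} = u_{-2} = u_{-3} = 0. Then u_n is an integer for all n ≥ 0. -/
/-!
The integrality comes from a closed form for the generating function. The universal elliptic curve
over `X₁(7)` has Tate normal form `y² + a x y + b y = x³ + b x²` with `a = 1 - X - X²` and
`b = X² + X³`, and its holomorphic period at the cusp `X = 0` is the constant term of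
`(a + y / x + b / x - x² / y - b x / y)⁻¹`. Expanding as a geometric series, this is
`∑ (-1)ᵐ⁺ᵏ (2m + k)! / (m! k!² (m - k)!) bᵐ / a²ᵐ⁺ᵏ⁺¹` over `k ≤ m`, visibly a power series with
integer coefficients. Creative telescoping shows that it is killed by the Picard-Fuchs operator, and
the recurrence says the same of `∑ uₙ Xⁿ`. In characteristic zero the constant term determines a
solution, because the operator multiplies the lowest term `c Xⁿ` of a series by `n²`. Since `b` is
divisible by `X`, modulo `X ^ N` only the terms with `m < N` matter.
-/

namespace Gamma17

open PowerSeries Finset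

section TateTerm

/-- The signed multinomial coefficient `(-1)ᵐ⁺ᵏ (2m + k)! / (m! k!² (m - k)!)`, written as a product
of binomials so that it vanishes for `m < k`. It is the coefficient of `bᵐ / a²ᵐ⁺ᵏ⁺¹` in the period
of the curve `y² + a x y + b y = x³ + b x²`. -/
def tateCoeff (m k : ℕ) : ℤ :=
  (-1) ^ (m + k) * ((2 * m + k).choose m * (m + k).choose k * m.choose k : ℕ)

lemma cast_sub_mul_choose {R : Type*} [CommRing R] (m k : ℕ) :
    ((m : R) - k) * m.choose k = (k + 1) * m.choose (k + 1) := by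
  rcases le_or_gt k m with hkm | hmk
  · have h := congrArg (Nat.cast (R := R)) (Nat.choose_succ_right_eq m k)
    push_cast [hkm] at h
    linear_combination -h
  · simp [Nat.choose_eq_zero_of_lt hmk, Nat.choose_eq_zero_of_lt (Nat.lt_succ_of_lt hmk)]

lemma cast_succ_sub_mul_choose_succ {R : Type*} [CommRing R] (m k : ℕ) :
    ((m : R) + 1 - k) * (m + 1).choose k = (m + 1) * m.choose k := by
  have h := congrArg (Nat.cast (R := R)) (Nat.add_one_mul_choose_eq m k)
  have h' := cast_sub_mul_choose (R := R) (m + 1) k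
  push_cast at h h'
  linear_combination h' - h

lemma tateCoeff_eq_zero_of_lt {m k : ℕ} (h : m < k) : tateCoeff m k = 0 := by
  simp [tateCoeff, Nat.choose_eq_zero_of_lt h]

lemma tateCoeff_succ_right (m k : ℕ) :
    ((k : ℤ) + 1) ^ 2 * tateCoeff m (k + 1) = -((2 * m + k + 1) * (m - k) * tateCoeff m k) := by
  have h₁ := cast_succ_sub_mul_choose_succ (R := ℤ) (2 * m + k) m
  have h₂ := congrArg (Nat.cast (R := ℤ)) (Nat.add_one_mul_choose_eq (m + k) k)
  have h₃ := cast_sub_mul_choose (R := ℤ) m k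
  simp only [tateCoeff, ← add_assoc, pow_succ (-1 : ℤ) (m + k)]
  push_cast at h₁ h₂ h₃ ⊢
  linear_combination (-1) ^ (m + k) *
    ((k + 1) * (2 * m + k + 1).choose m * m.choose (k + 1) * h₂
      + (m + k + 1) * (2 * m + k + 1).choose m * (m + k).choose k * h₃
      - (m - k) * (m + k).choose k * m.choose k * h₁)

lemma tateCoeff_succ_left (m k : ℕ) :
    ((m : ℤ) + 1) * (m + 1 - k) * tateCoeff (m + 1) k =
      -((2 * m + k + 2) * (2 * m + k + 1) * tateCoeff m k) := by
  have h₁ := congrArg (Nat.cast (R := ℤ)) (Nat.add_one_mul_choose_eq (2 * m + k + 1) m)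
  have h₂ := cast_succ_sub_mul_choose_succ (R := ℤ) (2 * m + k) m
  have h₃ := cast_succ_sub_mul_choose_succ (R := ℤ) (m + k) k
  have h₄ := cast_succ_sub_mul_choose_succ (R := ℤ) m k
  simp only [tateCoeff, add_right_comm _ 1 k, pow_succ (-1 : ℤ) (m + k),
    show 2 * (m + 1) + k = 2 * m + k + 1 + 1 by ring]
  push_cast at h₁ h₂ h₃ h₄ ⊢
  linear_combination (-1) ^ (m + k) *
    ((m + 1 - k) * (m + k + 1).choose k * (m + 1).choose k * h₁
      - (2 * m + k + 2) * (2 * m + k + 1).choose m * (m + k + 1).choose k * h₄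
      - (2 * m + k + 2) * (2 * m + k + 1).choose m * m.choose k * h₃
      - (2 * m + k + 2) * (m + k).choose k * m.choose k * h₂)

lemma tateCoeff_succ_succ (m k : ℕ) :
    ((m : ℤ) + 1) * (k + 1) * tateCoeff (m + 1) (k + 1) =
      (2 * m + k + 1) * (8 * m + k + 6) * tateCoeff m k
        - 2 * (2 * m + 1) * (k + 1) * tateCoeff m (k + 1) := by
  have h₁ := tateCoeff_succ_right (m + 1) k
  have h₂ := tateCoeff_succ_left m k
  have h₃ := tateCoeff_succ_right m k
  apply mul_left_cancel₀ (show (k : ℤ) + 1 ≠ 0 by positivity)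
  push_cast at h₁
  linear_combination (m + 1) * h₁ - (2 * m + k + 3) * h₂ + 2 * (2 * m + 1) * h₃

variable {A : Type*} [CommRing A] (b q : A)

/-- The `(m, k)` term of the period of `y² + a x y + b y = x³ + b x²`, where `q` stands for
`a⁻¹`. -/
def tateTerm (m k : ℕ) : A := tateCoeff m k * (b ^ m * q ^ (2 * m + k + 1))

lemma tateTerm_eq_zero_of_lt {m k : ℕ} (h : m < k) : tateTerm b q m k = 0 := by
  simp [tateTerm, tateCoeff_eq_zero_of_lt h]

lemma tateTerm_succ_right (m k : ℕ) :
    ((k : A) + 1) ^ 2 * tateTerm b q m (k + 1) =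
      -((2 * m + k + 1) * (m - k) * q * tateTerm b q m k) := by
  have h := congrArg (Int.cast (R := A)) (tateCoeff_succ_right m k)
  push_cast at h
  simp only [tateTerm]
  linear_combination b ^ m * q ^ (2 * m + k + 2) * h

lemma tateTerm_succ_left (m k : ℕ) :
    ((m : A) + 1) * (m + 1 - k) * tateTerm b q (m + 1) k =
      -((2 * m + k + 2) * (2 * m + k + 1) * (b * q ^ 2) * tateTerm b q m k) := by
  have h := congrArg (Int.cast (R := A)) (tateCoeff_succ_left m k)
  push_cast at h
  simp only [tateTerm]
  linear_combination b ^ (m + 1) * q ^ (2 * m + k + 3) * h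

lemma tateTerm_succ_succ (m k : ℕ) :
    ((m : A) + 1) * (k + 1) * tateTerm b q (m + 1) (k + 1) =
      (2 * m + k + 1) * (8 * m + k + 6) * (b * q ^ 3) * tateTerm b q m k
        - 2 * (2 * m + 1) * (k + 1) * (b * q ^ 2) * tateTerm b q m (k + 1) := by
  have h := congrArg (Int.cast (R := A)) (tateCoeff_succ_succ m k)
  push_cast at h
  simp only [tateTerm]
  linear_combination b ^ (m + 1) * q ^ (2 * m + k + 4) * h

lemma dvd_tateTerm (m k : ℕ) : b ^ m ∣ tateTerm b q m k :=
  (dvd_mul_right _ _).mul_left _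

variable {b q} {R : Type*} [CommRing R] [Algebra R A] (D : Derivation R A A)

lemma derivation_pow_of_eq_mul {f g : A} (h : D f = g * f) (n : ℕ) :
    D (f ^ n) = n * g * f ^ n := by
  induction n with
  | zero => simp
  | succ n ih =>
    rw [pow_succ, D.leibniz, ih, h]
    simp only [smul_eq_mul]
    push_cast
    ring

lemma derivation_tateTerm {β γ : A} (hb : D b = β * b) (hq : D q = γ * q) (m k : ℕ) :
    D (tateTerm b q m k) = (m * β + (2 * m + k + 1) * γ) * tateTerm b q m k := by
  simp only [tateTerm, D.leibniz, D.map_intCast, smul_eq_mul, derivation_pow_of_eq_mul D hb,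
    derivation_pow_of_eq_mul D hq]
  push_cast
  ring

lemma derivation_derivation_of_eq_mul {f g : A} (h : D f = g * f) :
    D (D f) = (g ^ 2 + D g) * f := by
  rw [h, D.leibniz, h]
  simp only [smul_eq_mul]
  ring

end TateTerm

section PicardFuchs

variable (R : Type*) [CommRing R]

/-- The Euler derivation `X d/dX`. -/
noncomputable def euler : Derivation R R⟦X⟧ R⟦X⟧ := (X : R⟦X⟧) • derivative R

/-- The differential operator `a θ² + b θ + c`, where `θ` is the Euler derivation. -/
noncomputable def eulerQuadratic (a b c : ℕ) : R⟦X⟧ →ₗ[R] R⟦X⟧ :=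
  a • (euler R).toLinearMap ∘ₗ (euler R).toLinearMap + b • (euler R).toLinearMap
    + c • LinearMap.id

/-- The Picard-Fuchs operator of the universal elliptic curve over `X₁(7)`. -/
noncomputable def picardFuchs : R⟦X⟧ →ₗ[R] R⟦X⟧ :=
  eulerQuadratic R 1 0 0 - (X : R⟦X⟧) • eulerQuadratic R 4 4 1
    - (X ^ 2 : R⟦X⟧) • eulerQuadratic R 13 26 15 - (X ^ 3 : R⟦X⟧) • eulerQuadratic R 9 27 21
    - (X ^ 4 : R⟦X⟧) • eulerQuadratic R 1 4 4

variable {R}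

lemma eulerQuadratic_apply (a b c : ℕ) (f : R⟦X⟧) :
    eulerQuadratic R a b c f = a * euler R (euler R f) + b * euler R f + c * f := by
  simp [eulerQuadratic]

lemma picardFuchs_apply (f : R⟦X⟧) :
    picardFuchs R f = eulerQuadratic R 1 0 0 f - X * eulerQuadratic R 4 4 1 f
      - X ^ 2 * eulerQuadratic R 13 26 15 f - X ^ 3 * eulerQuadratic R 9 27 21 f
      - X ^ 4 * eulerQuadratic R 1 4 4 f :=
  rfl

lemma euler_X : euler R X = X := by simp [euler]

lemma coeff_euler (f : R⟦X⟧) (n : ℕ) : coeff n (euler R f) = n * coeff n f := by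
  cases n with
  | zero => simp [euler]
  | succ n => simp [euler, coeff_succ_X_mul, coeff_derivative, mul_comm]

lemma coeff_eulerQuadratic (a b c : ℕ) (f : R⟦X⟧) (n : ℕ) :
    coeff n (eulerQuadratic R a b c f) = (a * n ^ 2 + b * n + c) * coeff n f := by
  simp only [eulerQuadratic_apply, ← nsmul_eq_mul, map_add, map_nsmul, coeff_euler]
  simp only [nsmul_eq_mul]
  ring

lemma X_pow_dvd_eulerQuadratic (a b c : ℕ) {f : R⟦X⟧} {n : ℕ} (h : X ^ n ∣ f) :
    X ^ n ∣ eulerQuadratic R a b c f := by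
  rw [X_pow_dvd_iff] at h ⊢
  intro i hi
  rw [coeff_eulerQuadratic, h i hi, mul_zero]

lemma coeff_picardFuchs_of_X_pow_dvd {f : R⟦X⟧} {n : ℕ} (h : X ^ n ∣ f) :
    coeff n (picardFuchs R f) = n ^ 2 * coeff n f := by
  have hcoeff (d a b c : ℕ) : coeff n (X ^ (d + 1) * eulerQuadratic R a b c f) = 0 := by
    refine X_pow_dvd_iff.mp ?_ n n.lt_succ_self
    rw [pow_succ', pow_succ', mul_assoc]
    exact mul_dvd_mul_left X ((X_pow_dvd_eulerQuadratic a b c h).mul_left _)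
  have hcoeff₁ := hcoeff 0
  rw [zero_add, pow_one] at hcoeff₁
  simp [picardFuchs_apply, hcoeff, hcoeff₁, coeff_eulerQuadratic]

lemma X_pow_dvd_of_X_pow_dvd_picardFuchs [NoZeroDivisors R] [CharZero R] {f : R⟦X⟧} {n : ℕ}
    (h₀ : coeff 0 f = 0) (h : X ^ n ∣ picardFuchs R f) : X ^ n ∣ f := by
  refine X_pow_dvd_iff.mpr fun i hi ↦ ?_
  induction i using Nat.strong_induction_on with
  | h i ih =>
    rcases eq_or_ne i 0 with rfl | hi₀
    · exact h₀
    · have hdvd : X ^ i ∣ f := X_pow_dvd_iff.mpr fun j hj ↦ ih j hj (hj.trans hi)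
      have hcoeff := X_pow_dvd_iff.mp h i hi
      rw [coeff_picardFuchs_of_X_pow_dvd hdvd] at hcoeff
      exact (mul_eq_zero.mp hcoeff).resolve_left (pow_ne_zero 2 (Nat.cast_ne_zero.mpr hi₀))

lemma eulerQuadratic_map {S : Type*} [CommRing S] (φ : R →+* S) (a b c : ℕ) (f : R⟦X⟧) :
    eulerQuadratic S a b c (f.map φ) = (eulerQuadratic R a b c f).map φ := by
  ext n
  simp [coeff_eulerQuadratic]

lemma picardFuchs_map {S : Type*} [CommRing S] (φ : R →+* S) (f : R⟦X⟧) :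
    picardFuchs S (f.map φ) = (picardFuchs R f).map φ := by
  simp [picardFuchs_apply, eulerQuadratic_map]

end PicardFuchs

section Recurrence

variable {R : Type*} [CommRing R]

/-- The generating function `∑ u n Xⁿ` over `n ≥ 0` of a sequence indexed by the integers. -/
noncomputable def genFun (u : ℤ → R) : R⟦X⟧ := mk fun n : ℕ ↦ u n

lemma coeff_genFun (u : ℤ → R) (n : ℕ) : coeff n (genFun u) = u n := coeff_mk _ _

lemma coeff_X_pow_mul_genFun {u : ℤ → R} (hu : ∀ j < 0, u j = 0) (d n : ℕ) :
    coeff n (X ^ d * genFun u) = u (n - d) := by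
  rw [coeff_X_pow_mul']
  split_ifs with hdn
  · rw [coeff_genFun, Nat.cast_sub hdn]
  · exact (hu _ (by lia)).symm

lemma eulerQuadratic_genFun (a b c : ℕ) (u : ℤ → R) :
    eulerQuadratic R a b c (genFun u) = genFun fun j ↦ (a * j ^ 2 + b * j + c) * u j := by
  ext n
  simp [coeff_eulerQuadratic, coeff_genFun]

lemma coeff_picardFuchs_genFun {u : ℤ → R} (hu : ∀ j < 0, u j = 0) (n : ℕ) :
    coeff n (picardFuchs R (genFun u)) = n ^ 2 * u n
      - (4 * (n - 1) ^ 2 + 4 * (n - 1) + 1) * u (n - 1)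
      - (13 * (n - 2) ^ 2 + 26 * (n - 2) + 15) * u (n - 2)
      - (9 * (n - 3) ^ 2 + 27 * (n - 3) + 21) * u (n - 3)
      - ((n - 4) ^ 2 + 4 * (n - 4) + 4) * u (n - 4) := by
  have hcoeff (d a b c : ℕ) : coeff n (X ^ d * eulerQuadratic R a b c (genFun u)) =
      (a * (n - d) ^ 2 + b * (n - d) + c) * u (n - d) := by
    rw [eulerQuadratic_genFun, coeff_X_pow_mul_genFun fun j hj ↦ by rw [hu j hj, mul_zero]]
    push_cast
    rfl
  have hcoeff₁ := hcoeff 1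
  rw [pow_one] at hcoeff₁
  simp [picardFuchs_apply, hcoeff, hcoeff₁, coeff_eulerQuadratic, coeff_genFun]

lemma picardFuchs_genFun_eq_zero {u : ℤ → R} (hu : ∀ j < 0, u j = 0)
    (hrec : ∀ n : ℕ, ((n : R) + 1) ^ 2 * u (n + 1) =
      (2 * (n : R) + 1) ^ 2 * u n + (13 * (n : R) ^ 2 + 2) * u (n - 1)
        + (9 * (n : R) ^ 2 - 9 * (n : R) + 3) * u (n - 2) + ((n : R) - 1) ^ 2 * u (n - 3)) :
    picardFuchs R (genFun u) = 0 := by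
  ext i
  rw [coeff_picardFuchs_genFun hu]
  cases i with
  | zero => simp [hu]
  | succ n =>
    rw [show ((n + 1 : ℕ) : ℤ) - 1 = n by lia, show ((n + 1 : ℕ) : ℤ) - 2 = n - 1 by lia,
      show ((n + 1 : ℕ) : ℤ) - 3 = n - 2 by lia, show ((n + 1 : ℕ) : ℤ) - 4 = n - 3 by lia,
      map_zero]
    push_cast
    linear_combination hrec n

end Recurrence

section Telescoping

/-- The coefficient `b = X² + X³` of the Tate normal form over `X₁(7)`. -/
noncomputable def tateB : ℤ⟦X⟧ := X ^ 2 * (1 + X)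

/-- The inverse of the coefficient `a = 1 - X - X²` of the Tate normal form over `X₁(7)`. -/
noncomputable def invTateA : ℤ⟦X⟧ := invOfUnit (1 - X - X ^ 2) 1

/-- The inverse of `1 + X`, needed for the logarithmic derivative of `tateB`. -/
noncomputable def invOneAddX : ℤ⟦X⟧ := invOfUnit (1 + X) 1

lemma mul_invTateA : (1 - X - X ^ 2) * invTateA = 1 := mul_invOfUnit _ _ (by simp)

lemma mul_invOneAddX : (1 + X) * invOneAddX = 1 := mul_invOfUnit _ _ (by simp)

lemma X_dvd_tateB : X ∣ tateB := (dvd_pow_self X two_ne_zero).mul_right _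

lemma euler_tateB : euler ℤ tateB = (2 + 3 * X) * invOneAddX * tateB := by
  have h : euler ℤ tateB = X ^ 2 * (2 + 3 * X) := by
    simp only [tateB, Derivation.leibniz, Derivation.leibniz_pow, map_add,
      Derivation.map_one_eq_zero, euler_X, smul_eq_mul, nsmul_eq_mul]
    push_cast
    ring
  rw [h, tateB]
  linear_combination -X ^ 2 * (2 + 3 * X) * mul_invOneAddX

lemma euler_invTateA : euler ℤ invTateA = X * (1 + 2 * X) * invTateA * invTateA := by
  have h := congrArg (euler ℤ) mul_invTateA
  simp only [Derivation.leibniz, Derivation.leibniz_pow, map_sub,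
    Derivation.map_one_eq_zero, euler_X, smul_eq_mul, nsmul_eq_mul] at h
  push_cast at h
  linear_combination invTateA * h - euler ℤ invTateA * mul_invTateA

lemma euler_invOneAddX : euler ℤ invOneAddX = -(X * invOneAddX ^ 2) := by
  have h := congrArg (euler ℤ) mul_invOneAddX
  simp only [Derivation.leibniz, map_add, Derivation.map_one_eq_zero, euler_X, smul_eq_mul] at h
  linear_combination invOneAddX * h - euler ℤ invOneAddX * mul_invOneAddX

/-- The `(m, k)` term of the period of the universal elliptic curve over `X₁(7)`. -/
noncomputable def periodTerm (m k : ℕ) : ℤ⟦X⟧ := tateTerm tateB invTateA m k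

lemma periodTerm_eq_zero_of_lt {m k : ℕ} (h : m < k) : periodTerm m k = 0 :=
  tateTerm_eq_zero_of_lt _ _ h

lemma X_pow_dvd_periodTerm (m k : ℕ) : X ^ m ∣ periodTerm m k :=
  (pow_dvd_pow_of_dvd X_dvd_tateB m).trans (dvd_tateTerm _ _ m k)

/-- The logarithmic derivative of `periodTerm m k` for the Euler derivation. -/
noncomputable def periodLogDeriv (m k : ℕ) : ℤ⟦X⟧ :=
  (m : ℤ⟦X⟧) * ((2 + 3 * X) * invOneAddX) + (2 * m + k + 1 : ℤ⟦X⟧) * (X * (1 + 2 * X) * invTateA)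

lemma euler_periodTerm (m k : ℕ) :
    euler ℤ (periodTerm m k) = periodLogDeriv m k * periodTerm m k :=
  derivation_tateTerm _ euler_tateB euler_invTateA m k

lemma euler_periodLogDeriv (m k : ℕ) :
    euler ℤ (periodLogDeriv m k) =
      (m : ℤ⟦X⟧) * (3 * X * invOneAddX - (2 + 3 * X) * X * invOneAddX ^ 2)
        + (2 * m + k + 1 : ℤ⟦X⟧)
          * ((X + 4 * X ^ 2) * invTateA + (X * (1 + 2 * X) * invTateA) ^ 2) := by
  have hNat (n : ℕ) : euler ℤ (n : ℤ⟦X⟧) = 0 := Derivation.map_natCast _ n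
  have hTwo : euler ℤ (2 : ℤ⟦X⟧) = 0 := hNat 2
  have hThree : euler ℤ (3 : ℤ⟦X⟧) = 0 := hNat 3
  simp only [periodLogDeriv, map_add, Derivation.leibniz, Derivation.map_one_eq_zero, euler_X,
    euler_invTateA, euler_invOneAddX, hNat, hTwo, hThree, smul_eq_mul]
  ring

/-- The factor of `m * (m - k)` in `certLeft`, found by creative telescoping. The factors `m - k`
and `k` of the certificates absorb the denominators of the term ratios. -/
noncomputable def certAlpha : ℤ⟦X⟧ :=
  (-4 - 2 * X + 9 * X ^ 2 + 9 * X ^ 3 + 4 * X ^ 4 + X ^ 5) * invOneAddX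

/-- The factor of `k ^ 2` in `certRight`, found by creative telescoping. -/
noncomputable def certBeta : ℤ⟦X⟧ :=
  (X + 6 * X ^ 2 - 13 * X ^ 3 - 50 * X ^ 4 - 35 * X ^ 5 - 4 * X ^ 6) * invTateA

/-- The factor of `m * k` in `certLeft`, found by creative telescoping. In `certRight` it multiplies
the combination of terms that `tateTerm_succ_succ` evaluates. -/
noncomputable def certEps : ℤ⟦X⟧ :=
  (-4 - 5 * X + 4 * X ^ 2 + 13 * X ^ 3 + 14 * X ^ 4 + 5 * X ^ 5) * invOneAddX

/-- The certificate telescoping in `m`. -/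
noncomputable def certLeft (m k : ℕ) : ℤ⟦X⟧ :=
  m * (certAlpha * (m - k) + certEps * k) * periodTerm m k

/-- The certificate telescoping in `k`. -/
noncomputable def certRight (m k : ℕ) : ℤ⟦X⟧ :=
  k * (certBeta * k * periodTerm m k + certEps * ((m + 1) * periodTerm (m + 1) k
    + 2 * (2 * m + 1) * (tateB * invTateA ^ 2) * periodTerm m k))

-- Both sides are those of `picardFuchs_periodTerm`, divided by `periodTerm m k`.
lemma certificate_identity (m k : ℕ) :
    let g := periodLogDeriv m k
    let h := g ^ 2 + euler ℤ g
    h - X * (4 * h + 4 * g + 1) - X ^ 2 * (13 * h + 26 * g + 15)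
        - X ^ 3 * (9 * h + 27 * g + 21) - X ^ 4 * (h + 4 * g + 4) =
      -certAlpha * ((2 * m + k + 2 : ℤ⟦X⟧) * (2 * m + k + 1 : ℤ⟦X⟧) * (tateB * invTateA ^ 2)
          + (m : ℤ⟦X⟧) * (m - k : ℤ⟦X⟧))
        - certBeta * ((2 * m + k + 1 : ℤ⟦X⟧) * (m - k : ℤ⟦X⟧) * invTateA + (k : ℤ⟦X⟧) ^ 2)
        + certEps * ((2 * m + k + 1 : ℤ⟦X⟧) * (8 * m + k + 6 : ℤ⟦X⟧) * (tateB * invTateA ^ 3)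
          - 2 * (2 * m + 1 : ℤ⟦X⟧) * (k : ℤ⟦X⟧) * (tateB * invTateA ^ 2)
          - (m : ℤ⟦X⟧) * (k : ℤ⟦X⟧)) := by
  have hq := mul_invTateA
  have hr := mul_invOneAddX
  simp only [euler_periodLogDeriv]
  simp only [periodLogDeriv, tateB, certAlpha, certBeta, certEps]
  generalize invTateA = q at *
  generalize invOneAddX = r at *
  generalize (X : ℤ⟦X⟧) = x, (m : ℤ⟦X⟧) = m', (k : ℤ⟦X⟧) = k' at *
  grind

lemma picardFuchs_periodTerm (m k : ℕ) :
    picardFuchs ℤ (periodTerm m k) =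
      (certLeft (m + 1) k - certLeft m k) + (certRight m (k + 1) - certRight m k) := by
  have hright := tateTerm_succ_right tateB invTateA m k
  have hleft := tateTerm_succ_left tateB invTateA m k
  have hboth := tateTerm_succ_succ tateB invTateA m k
  simp only [picardFuchs_apply, eulerQuadratic_apply,
    derivation_derivation_of_eq_mul _ (euler_periodTerm m k)]
  simp only [euler_periodTerm, certLeft, certRight]
  simp only [periodTerm]
  push_cast
  linear_combination tateTerm tateB invTateA m k * certificate_identity m k - certAlpha * hleft
    - certBeta * hright - certEps * hboth

end Telescoping

section PartialSums

/-- The `m`-th row of the double series for the period, which is divisible by `X ^ m`. -/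
noncomputable def periodRow (m : ℕ) : ℤ⟦X⟧ := ∑ k ∈ range (m + 1), periodTerm m k

/-- The sum of the first `N` rows of the double series for the period. -/
noncomputable def periodPartialSum (N : ℕ) : ℤ⟦X⟧ := ∑ m ∈ range N, periodRow m

lemma picardFuchs_periodRow (m : ℕ) :
    picardFuchs ℤ (periodRow m) =
      ∑ k ∈ range (m + 2), certLeft (m + 1) k - ∑ k ∈ range (m + 1), certLeft m k := by
  have hboundary : certRight m (m + 1) - certRight m 0 = certLeft (m + 1) (m + 1) := by
    simp only [certRight, certLeft, periodTerm_eq_zero_of_lt m.lt_succ_self]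
    push_cast
    ring
  simp only [periodRow, map_sum, picardFuchs_periodTerm, sum_add_distrib, sum_sub_distrib]
  rw [← sum_sub_distrib (fun k ↦ certRight m (k + 1)), sum_range_sub, hboundary,
    sum_range_succ _ (m + 1)]
  ring

lemma picardFuchs_periodPartialSum (N : ℕ) :
    picardFuchs ℤ (periodPartialSum N) = ∑ k ∈ range (N + 1), certLeft N k := by
  rw [periodPartialSum, map_sum, sum_congr rfl fun m _ ↦ picardFuchs_periodRow m,
    sum_range_sub fun m ↦ ∑ k ∈ range (m + 1), certLeft m k]
  simp [certLeft]

lemma X_pow_dvd_picardFuchs_periodPartialSum (N : ℕ) :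
    X ^ N ∣ picardFuchs ℤ (periodPartialSum N) := by
  rw [picardFuchs_periodPartialSum]
  exact dvd_sum fun k _ ↦ (X_pow_dvd_periodTerm N k).mul_left _

lemma coeff_zero_periodPartialSum_succ (N : ℕ) : coeff 0 (periodPartialSum (N + 1)) = 1 := by
  have hrow (m : ℕ) : coeff 0 (periodRow (m + 1)) = 0 :=
    X_pow_dvd_iff.mp (dvd_sum fun k _ ↦ X_pow_dvd_periodTerm (m + 1) k) 0 m.succ_pos
  rw [periodPartialSum, sum_range_succ', map_add, map_sum, sum_congr rfl fun m _ ↦ hrow m]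
  simp [periodRow, periodTerm, tateTerm, tateCoeff, invTateA]

end PartialSums

end Gamma17

open PowerSeries Gamma17

theorem gamma1_7_integrality_general {R : Type*} [CommRing R] [NoZeroDivisors R] [CharZero R]
    {u : ℤ → R} (huneg : ∀ j < 0, u j = 0)
    (hrec : ∀ n : ℕ, ((n : R) + 1) ^ 2 * u (n + 1) =
      (2 * (n : R) + 1) ^ 2 * u n + (13 * (n : R) ^ 2 + 2) * u (n - 1)
        + (9 * (n : R) ^ 2 - 9 * (n : R) + 3) * u (n - 2) + ((n : R) - 1) ^ 2 * u (n - 3)) (n : ℕ) :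
    ∃ z : ℤ, u n = z * u 0 := by
  have hsolution : picardFuchs R (genFun u) = 0 := picardFuchs_genFun_eq_zero huneg hrec
  set S := periodPartialSum (n + 1)
  have hdvd : X ^ (n + 1) ∣ genFun u - u 0 • S.map (Int.castRingHom R) := by
    apply X_pow_dvd_of_X_pow_dvd_picardFuchs
    · simp [S, coeff_genFun, coeff_zero_periodPartialSum_succ, -coeff_zero_eq_constantCoeff]
    · rw [map_sub, hsolution, zero_sub, map_smul, picardFuchs_map, dvd_neg, smul_eq_C_mul]
      apply Dvd.dvd.mul_left
      simpa using map_dvd (map (Int.castRingHom R)) (X_pow_dvd_picardFuchs_periodPartialSum (n + 1))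
  refine ⟨coeff n S, ?_⟩
  simpa [sub_eq_zero, coeff_genFun, mul_comm] using X_pow_dvd_iff.mp hdvd n n.lt_succ_self

/-- The coefficients of the holomorphic Picard-Fuchs solution attached to `Γ₁(7)` are integers:
if `(n+1)^2 u_{n+1} = (2n+1)^2 u_n + (13n^2+2) u_{n-1} + (9n^2-9n+3) u_{n-2} + (n-1)^2 u_{n-3}`
with `u 0 = 1` and `u j = 0` for `j < 0`, then every `u n` is an integer. -/
theorem gamma1_7_integrality (u : ℤ → ℚ) (hu0 : u 0 = 1)
    (huneg : ∀ j : ℤ, j < 0 → u j = 0)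
    (hrec : ∀ n : ℕ, ((n : ℚ) + 1) ^ 2 * u ((n : ℤ) + 1) =
      (2 * (n : ℚ) + 1) ^ 2 * u n + (13 * (n : ℚ) ^ 2 + 2) * u ((n : ℤ) - 1) +
      (9 * (n : ℚ) ^ 2 - 9 * (n : ℚ) + 3) * u ((n : ℤ) - 2) +
      ((n : ℚ) - 1) ^ 2 * u ((n : ℤ) - 3)) :
    ∀ n : ℕ, ∃ z : ℤ, u n = z := by
  simpa [hu0] using gamma1_7_integrality_general huneg hrec
end

section
/- Define v_n by the recurrence (n+1)^2 v_{n+1} = -(9n^2+9n+3) v_n - (13n^2+2) v_{n-1} - (2n-1)^2 v_{n-2} + (n-1)^2 v_{n-3} with v_0 = 1 and v_{-1} = v_{-2} = v_{-3} = 0. Then v_n is an integer for all n ≥ 0. -/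
/-!
With `d = -1/t`, the universal curve `Y² + (1 - c)XY - bY = X³ - bX²`, `c = d² - d`, `b = d³ - d²`,
over `X₁(7)` becomes, after completing the square in `Y` and putting `X = (1 + t)x/t²`, a double
cover of the `x`-line branched along a Laurent polynomial `Q` in `x` that is a perfect square at
`t = 0`, and its holomorphic differential becomes `U dx/x` with `U = Q^(-1/2)`. Since `Q = A² + 4B`
with `A` a unit and `B` divisible by `t`, Hensel's lemma puts `U` in `ℤ[x, x⁻¹]⟦t⟧`. The
Picard-Fuchs operator maps `U` to an `x d/dx`-derivative, which has no constant term in `x`, so the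
constant term in `x` of `U`, a power series in `t` with integer coefficients, is annihilated by the
operator. Its coefficients satisfy the recurrence, which has only one solution for given initial
values.
-/

open PowerSeries LaurentSeries AddMonoidAlgebra
open scoped LaurentPolynomial
open LaurentPolynomial (T T_add T_zero)

section InverseSquareRoot

theorem derivation_ofNat {R A M : Type*} [CommSemiring R] [CommSemiring A] [AddCommMonoid M]
    [Module R M] [Algebra R A] [Module A M] (D : Derivation R A M) (n : ℕ) [n.AtLeastTwo] :
    D ofNat(n) = 0 :=
  D.map_natCast n

variable {R R' S : Type*} [CommRing R] [CommRing R'] [CommRing S] [Algebra R S] [Algebra R' S]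
  {Q U : S}

theorem two_mul_derivation_invSqrt (D : Derivation R S S) (hU : U ^ 2 * Q = 1) :
    2 * D U = -U ^ 3 * D Q := by
  have h := congrArg D hU
  simp only [Derivation.leibniz, Derivation.leibniz_pow, smul_eq_mul, nsmul_eq_mul,
    Derivation.map_one_eq_zero] at h
  push_cast at h
  linear_combination U * h - 2 * D U * hU

theorem four_mul_derivation_derivation_invSqrt (D : Derivation R S S) (hU : U ^ 2 * Q = 1) :
    4 * D (D U) = 3 * U ^ 5 * D Q ^ 2 - 2 * U ^ 3 * D (D Q) := by
  have hD := two_mul_derivation_invSqrt D hU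
  have h := congrArg D hD
  simp only [Derivation.leibniz, Derivation.leibniz_pow, smul_eq_mul, nsmul_eq_mul,
    Derivation.map_neg, derivation_ofNat] at h
  push_cast at h
  linear_combination 2 * h - 3 * U ^ 2 * D Q * hD

theorem two_mul_derivation_mul_invSqrt_pow_three (D : Derivation R S S) (hU : U ^ 2 * Q = 1)
    (M : S) : 2 * D (M * U ^ 3) = U ^ 5 * (2 * Q * D M - 3 * M * D Q) := by
  simp only [Derivation.leibniz, Derivation.leibniz_pow, smul_eq_mul, nsmul_eq_mul]
  push_cast
  linear_combination 3 * M * U ^ 2 * two_mul_derivation_invSqrt D hU - 2 * U ^ 3 * D M * hU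

/-- Multiplying by `Q^(5/2)` turns the exactness of a second-order expression in `Q^(-1/2)` into an
identity between derivatives of `Q` and `M`. -/
theorem four_mul_secondOrder_invSqrt_eq (τ : Derivation R S S) (δ : Derivation R' S S)
    (hU : U ^ 2 * Q = 1) {a b c M : S}
    (hM : a * (3 * τ Q ^ 2 - 2 * Q * τ (τ Q)) - 2 * b * Q * τ Q + 4 * c * Q ^ 2 =
      2 * Q * δ M - 3 * M * δ Q) :
    4 * (a * τ (τ U) + b * τ U + c * U) = 2 * δ (M * U ^ 3) := by
  rw [two_mul_derivation_mul_invSqrt_pow_three δ hU]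
  linear_combination a * four_mul_derivation_derivation_invSqrt τ hU +
    2 * b * two_mul_derivation_invSqrt τ hU + U ^ 5 * hM +
    (2 * U ^ 3 * (a * τ (τ Q) + b * τ Q) - 4 * c * U * (1 + U ^ 2 * Q)) * hU

/-- No division by `2` is needed: if `z ^ 2 + a * z = b`, then `(2 * z + a) ^ 2 = a ^ 2 + 4 * b`,
and Hensel's lemma provides such a `z`. -/
theorem exists_sq_mul_sq_add_four_mul_eq_one {I : Ideal R} [HenselianRing R I] {a b : R}
    (ha : IsUnit a) (hb : b ∈ I) : ∃ u : R, u ^ 2 * (a ^ 2 + 4 * b) = 1 ∧ u * a - 1 ∈ I := by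
  obtain ⟨z, hz, hzI⟩ := HenselianRing.is_henselian (I := I)
    (.X ^ 2 + .C a * .X - .C b) (by monicity!) 0 (by simpa using hb)
    (by simpa using ha.map (Ideal.Quotient.mk I))
  simp only [Polynomial.IsRoot.def, Polynomial.eval_sub, Polynomial.eval_add, Polynomial.eval_pow,
    Polynomial.eval_X, Polynomial.eval_mul, Polynomial.eval_C] at hz
  rw [sub_zero] at hzI
  have hunit : IsUnit (2 * z + a) := by
    have := isLocalHom_of_le_jacobson_bot I HenselianRing.jac
    refine isUnit_of_map_unit (Ideal.Quotient.mk I) _ ?_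
    simpa [Ideal.Quotient.eq_zero_iff_mem.mpr hzI] using ha.map (Ideal.Quotient.mk I)
  obtain ⟨u, hu⟩ := hunit.exists_right_inv
  refine ⟨u, ?_, ?_⟩
  · linear_combination (1 + (2 * z + a) * u) * hu - 4 * u ^ 2 * hz
  · rw [show u * a - 1 = -(2 * u) * z by linear_combination hu]
    exact I.mul_mem_left _ hzI

end InverseSquareRoot

section PicardFuchs

/-- The Picard-Fuchs operator
`θ² + t(9θ² + 9θ + 3) + t²(13θ² + 26θ + 15) + t³(2θ + 3)² - t⁴(θ + 2)²` of `Γ₁(7)` at infinity,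
for an arbitrary map `θ` in place of `t d/dt`. -/
def picardFuchs {S : Type*} [CommRing S] (t : S) (θ : S → S) (u : S) : S :=
  θ (θ u) + t * (9 • θ (θ u) + 9 • θ u + 3 • u) + t ^ 2 * (13 • θ (θ u) + 26 • θ u + 15 • u) +
    t ^ 3 * (4 • θ (θ u) + 12 • θ u + 9 • u) - t ^ 4 * (θ (θ u) + 4 • θ u + 4 • u)

theorem map_picardFuchs {S S' : Type*} [CommRing S] [CommRing S'] (Φ : S →+ S') {t : S} {t' : S'}
    {θ : S → S} {θ' : S' → S'} (ht : ∀ u, Φ (t * u) = t' * Φ u) (hθ : ∀ u, Φ (θ u) = θ' (Φ u))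
    (u : S) : Φ (picardFuchs t θ u) = picardFuchs t' θ' (Φ u) := by
  have hpow (k : ℕ) (u : S) : Φ (t ^ k * u) = t' ^ k * Φ u := by
    induction k with
    | zero => simp
    | succ k ih => rw [pow_succ', mul_assoc, ht, ih, pow_succ', mul_assoc]
  simp only [picardFuchs, map_add, map_sub, map_nsmul, ht, hpow, hθ]

variable {R R' S : Type*} [CommRing R] [CommRing R'] [CommRing S] [Algebra R S] [Algebra R' S]
  {t x y : S}

/-- The polynomial `Q` for which `U = Q^(-1/2)` is the density of the holomorphic differential with
respect to `dx/x`, with `y` standing for `x⁻¹`. It is `t⁴/X²` times the discriminant in `Y` of the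
Kubert-Tate curve `Y² + (1 - c)XY - bY = X³ - bX²` with `c = (1 + t)/t²`, `b = -(1 + t)/t³`,
evaluated at `X = (1 + t)x/t²`. -/
def kubertTateDisc (t x y : S) : S :=
  (1 + t - t ^ 2 - t * y) ^ 2 + 4 * (t * (1 + t) * (1 + t * x))

/-- A polynomial `M` such that the Picard-Fuchs operator maps `Q^(-1/2)`, where
`Q = kubertTateDisc t x y`, to half the `x d/dx`-derivative of `M Q^(-3/2)`. Its coefficients come
from solving the linear system that `four_mul_secondOrder_invSqrt_eq` imposes on them. -/
def picardFuchsPrimitive (t x y : S) : S :=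
  2 * t ^ 2 * (1 + 3 * t + 2 * t ^ 2 + t ^ 3 - t ^ 4) * y ^ 2 -
    2 * t * (1 + t + 3 * t ^ 2 + t ^ 4 - t ^ 5 + t ^ 6) * y +
    2 * t * (1 + 8 * t + 36 * t ^ 2 + 44 * t ^ 3 + 20 * t ^ 4 - 2 * t ^ 5 - t ^ 6) -
    4 * t ^ 2 * (4 + 18 * t + 23 * t ^ 2 + 10 * t ^ 3 - t ^ 4 - t ^ 5) * x

theorem tDerivation_kubertTateDisc (τ : Derivation R S S) (ht : τ t = t) (hx : τ x = 0)
    (hy : τ y = 0) :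
    τ (kubertTateDisc t x y) =
      2 * (1 + t - t ^ 2 - t * y) * (t - 2 * t ^ 2 - t * y) +
        4 * (t + 2 * t ^ 2 + (2 * t ^ 2 + 3 * t ^ 3) * x) := by
  simp only [kubertTateDisc, map_add, map_sub, Derivation.leibniz, Derivation.leibniz_pow,
    smul_eq_mul, nsmul_eq_mul, Derivation.map_one_eq_zero, derivation_ofNat, ht, hx, hy]
  push_cast
  ring

theorem tDerivation_tDerivation_kubertTateDisc (τ : Derivation R S S) (ht : τ t = t)
    (hx : τ x = 0) (hy : τ y = 0) :
    τ (τ (kubertTateDisc t x y)) =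
      2 * (t - 2 * t ^ 2 - t * y) ^ 2 +
        2 * (1 + t - t ^ 2 - t * y) * (t - 4 * t ^ 2 - t * y) +
        4 * (t + 4 * t ^ 2 + (4 * t ^ 2 + 9 * t ^ 3) * x) := by
  simp only [tDerivation_kubertTateDisc τ ht hx hy, map_add, map_sub, Derivation.leibniz,
    Derivation.leibniz_pow, smul_eq_mul, nsmul_eq_mul, Derivation.map_one_eq_zero,
    derivation_ofNat, ht, hx, hy]
  push_cast
  ring

theorem xDerivation_kubertTateDisc (δ : Derivation R S S) (ht : δ t = 0) (hx : δ x = x)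
    (hy : δ y = -y) :
    δ (kubertTateDisc t x y) =
      2 * (1 + t - t ^ 2 - t * y) * (t * y) + 4 * (t ^ 2 * (1 + t) * x) := by
  simp only [kubertTateDisc, map_add, map_sub, Derivation.leibniz, Derivation.leibniz_pow,
    smul_eq_mul, nsmul_eq_mul, Derivation.map_one_eq_zero, derivation_ofNat, ht, hx, hy]
  push_cast
  ring

theorem xDerivation_picardFuchsPrimitive (δ : Derivation R S S) (ht : δ t = 0) (hx : δ x = x)
    (hy : δ y = -y) :
    δ (picardFuchsPrimitive t x y) =
      -4 * t ^ 2 * (1 + 3 * t + 2 * t ^ 2 + t ^ 3 - t ^ 4) * y ^ 2 +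
        2 * t * (1 + t + 3 * t ^ 2 + t ^ 4 - t ^ 5 + t ^ 6) * y -
        4 * t ^ 2 * (4 + 18 * t + 23 * t ^ 2 + 10 * t ^ 3 - t ^ 4 - t ^ 5) * x := by
  simp only [picardFuchsPrimitive, map_add, map_sub, Derivation.leibniz, Derivation.leibniz_pow,
    smul_eq_mul, nsmul_eq_mul, Derivation.map_one_eq_zero, derivation_ofNat, ht, hx, hy]
  push_cast
  ring

theorem four_mul_picardFuchs_invSqrt_eq (τ : Derivation R S S) (δ : Derivation R' S S) {U : S}
    (hxy : x * y = 1) (hτt : τ t = t) (hτx : τ x = 0) (hτy : τ y = 0)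
    (hδt : δ t = 0) (hδx : δ x = x) (hδy : δ y = -y)
    (hU : U ^ 2 * kubertTateDisc t x y = 1) :
    4 * picardFuchs t τ U = 2 * δ (picardFuchsPrimitive t x y * U ^ 3) := by
  have hexact := four_mul_secondOrder_invSqrt_eq τ δ hU
    (a := 1 + 9 * t + 13 * t ^ 2 + 4 * t ^ 3 - t ^ 4)
    (b := 9 * t + 26 * t ^ 2 + 12 * t ^ 3 - 4 * t ^ 4)
    (c := 3 * t + 15 * t ^ 2 + 9 * t ^ 3 - 4 * t ^ 4)
    (M := picardFuchsPrimitive t x y) (by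
      rw [tDerivation_tDerivation_kubertTateDisc τ hτt hτx hτy,
        tDerivation_kubertTateDisc τ hτt hτx hτy, xDerivation_kubertTateDisc δ hδt hδx hδy,
        xDerivation_picardFuchsPrimitive δ hδt hδx hδy, kubertTateDisc, picardFuchsPrimitive]
      linear_combination 24 * t ^ 3 *
        (-9 - 38 * t - 51 * t ^ 2 + 6 * t ^ 3 + 59 * t ^ 4 + 36 * t ^ 5 - 4 * t ^ 7 +
          (9 * t + 39 * t ^ 2 + 49 * t ^ 3 + 20 * t ^ 4 - 4 * t ^ 5 - 4 * t ^ 6) * y) * hxy)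
  rw [← hexact, picardFuchs]
  simp only [nsmul_eq_mul]
  push_cast
  ring

end PicardFuchs

section Euler

variable {A : Type*} [CommSemiring A]

/-- The Euler derivation `X d/dX` of `A⟦X⟧`. -/
noncomputable def eulerDerivation (A : Type*) [CommSemiring A] : Derivation A A⟦X⟧ A⟦X⟧ :=
  (X : A⟦X⟧) • d⁄dX A

theorem eulerDerivation_X : eulerDerivation A X = X := by
  simp [eulerDerivation]

theorem eulerDerivation_C (a : A) : eulerDerivation A (PowerSeries.C a) = 0 := by
  simp [eulerDerivation]

theorem coeff_eulerDerivation (f : A⟦X⟧) (n : ℕ) :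
    PowerSeries.coeff n (eulerDerivation A f) = n * PowerSeries.coeff n f := by
  cases n with
  | zero => simp [eulerDerivation]
  | succ n => simp [eulerDerivation, PowerSeries.coeff_succ_X_mul, coeff_derivative, mul_comm]

end Euler

section Coefficientwise

/-- The linear map of power series that applies `φ` to every coefficient. It is
`PowerSeries.map` for maps that need not be multiplicative. -/
noncomputable def coeffwise {R A B : Type*} [Semiring R] [Semiring A] [Semiring B] [Module R A]
    [Module R B] (φ : A →ₗ[R] B) : A⟦X⟧ →ₗ[R] B⟦X⟧ where
  toFun f := PowerSeries.mk fun n => φ (PowerSeries.coeff n f)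
  map_add' f g := by ext; simp
  map_smul' r f := by ext; simp

theorem coeff_coeffwise {R A B : Type*} [Semiring R] [Semiring A] [Semiring B] [Module R A]
    [Module R B] (φ : A →ₗ[R] B) (f : A⟦X⟧) (n : ℕ) :
    PowerSeries.coeff n (coeffwise φ f) = φ (PowerSeries.coeff n f) := by
  simp [coeffwise]

theorem coeffwise_X_mul {R A B : Type*} [Semiring R] [Semiring A] [Semiring B] [Module R A]
    [Module R B] (φ : A →ₗ[R] B) (f : A⟦X⟧) : coeffwise φ (X * f) = X * coeffwise φ f := by
  ext (_ | n) <;> simp [coeff_coeffwise, PowerSeries.coeff_succ_X_mul]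

theorem coeffwise_eulerDerivation {R A B : Type*} [Semiring R] [CommSemiring A] [CommSemiring B]
    [Module R A] [Module R B] (φ : A →ₗ[R] B) (f : A⟦X⟧) :
    coeffwise φ (eulerDerivation A f) = eulerDerivation B (coeffwise φ f) := by
  ext n
  simp [coeff_coeffwise, coeff_eulerDerivation, ← nsmul_eq_mul]

theorem coeffwise_picardFuchs {R A B : Type*} [Semiring R] [CommRing A] [CommRing B] [Module R A]
    [Module R B] (φ : A →ₗ[R] B) (f : A⟦X⟧) :
    coeffwise φ (picardFuchs X (eulerDerivation A) f) =
      picardFuchs X (eulerDerivation B) (coeffwise φ f) :=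
  map_picardFuchs (coeffwise φ).toAddMonoidHom (coeffwise_X_mul φ) (coeffwise_eulerDerivation φ) f

variable {R A : Type*} [CommRing R] [CommRing A] [Algebra R A]

/-- The extension of a derivation of `A` to the derivation of `A⟦X⟧` that kills `X`. -/
noncomputable def coeffwiseDerivation (D : Derivation R A A) : Derivation R A⟦X⟧ A⟦X⟧ :=
  Derivation.mk' (coeffwise D.toLinearMap) fun f g => by
    ext n
    rw [smul_eq_mul, smul_eq_mul, mul_comm g, map_add]
    simp only [coeff_coeffwise, PowerSeries.coeff_mul, map_sum, Derivation.coeFn_coe,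
      Derivation.leibniz, Finset.sum_add_distrib, smul_eq_mul, mul_comm (D _)]

theorem coeff_coeffwiseDerivation (D : Derivation R A A) (f : A⟦X⟧) (n : ℕ) :
    PowerSeries.coeff n (coeffwiseDerivation D f) = D (PowerSeries.coeff n f) :=
  coeff_coeffwise D.toLinearMap f n

theorem coeffwiseDerivation_C (D : Derivation R A A) (a : A) :
    coeffwiseDerivation D (PowerSeries.C a) = PowerSeries.C (D a) := by
  ext n
  simp [coeff_coeffwiseDerivation, PowerSeries.coeff_C, apply_ite D]

theorem coeffwiseDerivation_X (D : Derivation R A A) : coeffwiseDerivation D X = 0 := by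
  ext n
  simp [coeff_coeffwiseDerivation, PowerSeries.coeff_X, apply_ite D]

end Coefficientwise

section Grading

variable {R G : Type*} [CommRing R] [AddCommMonoid G]

/-- The linear endomorphism of `R[G]` that multiplies the component of degree `g` by `φ g`. -/
noncomputable def gradingMap (φ : G →+ R) : R[G] →ₗ[R] R[G] where
  toFun p := ofCoeff ((φ : G → R) • p.coeff)
  map_add' p q := by simp
  map_smul' r p := by ext; simp [mul_left_comm]

theorem coeff_gradingMap (φ : G →+ R) (p : R[G]) (g : G) :
    (gradingMap φ p).coeff g = φ g * p.coeff g := by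
  simp [gradingMap]

theorem gradingMap_single (φ : G →+ R) (g : G) (r : R) :
    gradingMap φ (single g r) = φ g • single g r := by
  ext h
  by_cases hg : g = h <;> simp [coeff_gradingMap, hg]

/-- `gradingMap φ` as a derivation; on `R[ℤ] = R[x, x⁻¹]` with `φ` the inclusion of `ℤ` it
is `x d/dx`. -/
noncomputable def gradingDerivation (φ : G →+ R) : Derivation R R[G] R[G] :=
  Derivation.mk' (gradingMap φ) fun p q => by
    induction p using AddMonoidAlgebra.induction_linear with
    | zero => simp
    | add p₁ p₂ h₁ h₂ => simp only [add_mul, map_add, h₁, h₂, smul_eq_mul, mul_add]; abel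
    | single g r =>
      induction q using AddMonoidAlgebra.induction_linear with
      | zero => simp
      | add q₁ q₂ h₁ h₂ => simp only [mul_add, map_add, h₁, h₂, smul_eq_mul, add_mul]; abel
      | single h s =>
        simp only [single_mul_single, gradingMap_single, smul_eq_mul, mul_smul_comm, map_add,
          add_smul, add_comm h g, mul_comm s r]
        exact add_comm _ _

theorem coeff_gradingDerivation (φ : G →+ R) (p : R[G]) (g : G) :
    (gradingDerivation φ p).coeff g = φ g * p.coeff g :=
  coeff_gradingMap φ p g

theorem gradingDerivation_single (φ : G →+ R) (g : G) (r : R) :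
    gradingDerivation φ (single g r) = φ g • single g r :=
  gradingMap_single φ g r

/-- The constant term of an element of `R[G]`, as a linear form. -/
noncomputable def constantTerm (R G : Type*) [Semiring R] [AddMonoid G] : R[G] →ₗ[R] R :=
  Finsupp.lapply 0 ∘ₗ (AddMonoidAlgebra.coeffLinearEquiv R).toLinearMap

theorem constantTerm_one {R G : Type*} [Semiring R] [AddMonoid G] : constantTerm R G 1 = 1 := by
  simp [constantTerm]

theorem constantTerm_gradingDerivation (φ : G →+ R) (p : R[G]) :
    constantTerm R G (gradingDerivation φ p) = 0 := by
  simp [constantTerm, coeff_gradingDerivation]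

theorem coeffwise_constantTerm_coeffwiseDerivation (φ : G →+ R) (f : R[G]⟦X⟧) :
    coeffwise (constantTerm R G) (coeffwiseDerivation (gradingDerivation φ) f) = 0 := by
  ext n
  simp [coeff_coeffwise, coeff_coeffwiseDerivation, constantTerm_gradingDerivation]

end Grading

section Period

theorem exists_invSqrt_kubertTateDisc (R : Type*) [CommRing R] :
    ∃ U : R[T;T⁻¹]⟦X⟧,
      U ^ 2 * kubertTateDisc X (PowerSeries.C (T 1)) (PowerSeries.C (T (-1))) = 1 ∧
        constantCoeff U = 1 := by
  let a : R[T;T⁻¹]⟦X⟧ := 1 + X - X ^ 2 - X * PowerSeries.C (T (-1))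
  have ha : constantCoeff a = 1 := by simp [a]
  obtain ⟨U, hU, hUa⟩ := exists_sq_mul_sq_add_four_mul_eq_one (I := Ideal.span {X}) (a := a)
    (b := X * (1 + X) * (1 + X * PowerSeries.C (T 1)))
    (PowerSeries.isUnit_iff_constantCoeff.mpr (ha ▸ isUnit_one))
    (Ideal.mem_span_singleton.mpr ⟨_, mul_assoc ..⟩)
  rw [Ideal.mem_span_singleton, PowerSeries.X_dvd_iff, map_sub, map_mul, ha, mul_one, map_one,
    sub_eq_zero] at hUa
  exact ⟨U, hU, hUa⟩

theorem four_mul_picardFuchs_constantTerm_invSqrt {R : Type*} [CommRing R] {U : R[T;T⁻¹]⟦X⟧}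
    (hU : U ^ 2 * kubertTateDisc X (PowerSeries.C (T 1)) (PowerSeries.C (T (-1))) = 1) :
    4 * picardFuchs X (eulerDerivation R) (coeffwise (constantTerm R ℤ) U) = 0 := by
  let δ := coeffwiseDerivation (gradingDerivation (Int.castAddHom R))
  have hδT (n : ℤ) : δ (PowerSeries.C (T n)) = n • PowerSeries.C (T n) := by
    simp only [δ, coeffwiseDerivation_C, T, gradingDerivation_single, Int.coe_castAddHom,
      Int.cast_smul_eq_zsmul, map_zsmul]
  have hexact : 4 * picardFuchs X (eulerDerivation R[T;T⁻¹]) U = 2 * δ (_ * U ^ 3) :=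
    four_mul_picardFuchs_invSqrt_eq (eulerDerivation R[T;T⁻¹]) δ
      (by rw [← map_mul, ← T_add, add_neg_cancel, T_zero, map_one])
      eulerDerivation_X (eulerDerivation_C _) (eulerDerivation_C _)
      (coeffwiseDerivation_X _) (by rw [hδT, one_smul]) (by rw [hδT, neg_one_smul]) hU
  simp only [← Nat.cast_ofNat (R := R⟦X⟧), ← Nat.cast_ofNat (R := R[T;T⁻¹]⟦X⟧),
    ← nsmul_eq_mul] at hexact ⊢
  rw [← coeffwise_picardFuchs, ← map_nsmul, hexact, map_nsmul,
    coeffwise_constantTerm_coeffwiseDerivation, nsmul_zero]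

theorem exists_picardFuchs_eq_zero :
    ∃ f : ℤ⟦X⟧, constantCoeff f = 1 ∧ picardFuchs X (eulerDerivation ℤ) f = 0 := by
  obtain ⟨U, hU, hU1⟩ := exists_invSqrt_kubertTateDisc ℤ
  refine ⟨coeffwise (constantTerm ℤ ℤ) U, ?_, ?_⟩
  · rw [← PowerSeries.coeff_zero_eq_constantCoeff_apply, coeff_coeffwise,
      PowerSeries.coeff_zero_eq_constantCoeff_apply, hU1, constantTerm_one]
  · refine (mul_eq_zero.mp (four_mul_picardFuchs_constantTerm_invSqrt hU)).resolve_left fun h => ?_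
    have h4 := congrArg constantCoeff h
    rw [map_ofNat, map_zero] at h4
    exact four_ne_zero h4

end Period

section Recurrence

variable {R S : Type*} [CommRing R] [CommRing S]

/-- The coefficient recurrence of `picardFuchs`, for sequences indexed by `ℤ` so that no initial
steps need separate treatment. -/
def PicardFuchsRecurrence (v : ℤ → R) : Prop :=
  ∀ n : ℕ, ((n : R) + 1) ^ 2 * v ((n : ℤ) + 1) =
    -(9 * (n : R) ^ 2 + 9 * (n : R) + 3) * v n - (13 * (n : R) ^ 2 + 2) * v ((n : ℤ) - 1) -
    (2 * (n : R) - 1) ^ 2 * v ((n : ℤ) - 2) + ((n : R) - 1) ^ 2 * v ((n : ℤ) - 3)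

theorem PicardFuchsRecurrence.map (φ : R →+* S) {v : ℤ → R} (hv : PicardFuchsRecurrence v) :
    PicardFuchsRecurrence (φ ∘ v) := fun n => by
  have h := congrArg φ (hv n)
  simp only [map_mul, map_add, map_sub, map_neg, map_pow, map_natCast, map_ofNat, map_one] at h
  exact h

theorem PicardFuchsRecurrence.unique [IsAddTorsionFree R] {v w : ℤ → R}
    (hv : PicardFuchsRecurrence v) (hw : PicardFuchsRecurrence w) (h : ∀ j ≤ 0, v j = w j) :
    v = w := by
  have eq_of_le (n : ℕ) : ∀ j ≤ (n : ℤ), v j = w j := by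
    induction n with
    | zero => exact h
    | succ n ih =>
      intro j hj
      obtain rfl | hj := hj.eq_or_lt
      · have hn : ((n : R) + 1) ^ 2 * v (n + 1) = ((n : R) + 1) ^ 2 * w (n + 1) := by
          rw [hv, hw, ih n le_rfl, ih _ (by lia), ih _ (by lia), ih _ (by lia)]
        refine nsmul_right_injective (pow_ne_zero 2 n.succ_ne_zero) ?_
        simpa [nsmul_eq_mul] using hn
      · exact ih j (by lia)
  exact funext fun j => eq_of_le j.toNat j j.self_le_toNat

theorem coeff_coe_X_pow_mul (f : R⟦X⟧) (k : ℕ) (j : ℤ) :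
    ((X ^ k * f : R⟦X⟧) : R⸨X⸩).coeff j = (f : R⸨X⸩).coeff (j - k) := by
  rw [PowerSeries.coe_mul, PowerSeries.coe_pow, PowerSeries.coe_X, HahnSeries.single_pow]
  simp [HahnSeries.coeff_single_mul]

theorem coeff_coe_eulerDerivation (f : R⟦X⟧) (j : ℤ) :
    ((eulerDerivation R f : R⟦X⟧) : R⸨X⸩).coeff j = j * (f : R⸨X⸩).coeff j := by
  simp only [PowerSeries.coeff_coe]
  split_ifs with hj
  · simp
  · lift j to ℕ using not_lt.mp hj
    simp [coeff_eulerDerivation]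

theorem coeff_coe_picardFuchs (f : R⟦X⟧) (j : ℤ) :
    ((picardFuchs X (eulerDerivation R) f : R⟦X⟧) : R⸨X⸩).coeff j =
      (j : R) ^ 2 * (f : R⸨X⸩).coeff j +
      (9 * ((j : R) - 1) ^ 2 + 9 * ((j : R) - 1) + 3) * (f : R⸨X⸩).coeff (j - 1) +
      (13 * ((j : R) - 2) ^ 2 + 26 * ((j : R) - 2) + 15) * (f : R⸨X⸩).coeff (j - 2) +
      (2 * ((j : R) - 3) + 3) ^ 2 * (f : R⸨X⸩).coeff (j - 3) -
      ((j : R) - 4 + 2) ^ 2 * (f : R⸨X⸩).coeff (j - 4) := by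
  have coeff_coe_X_mul (f : R⟦X⟧) (j : ℤ) :
      ((X * f : R⟦X⟧) : R⸨X⸩).coeff j = (f : R⸨X⸩).coeff (j - 1) := by
    simpa using coeff_coe_X_pow_mul f 1 j
  simp only [picardFuchs, PowerSeries.coe_add, PowerSeries.coe_sub, coeff_coe_X_mul,
    coeff_coe_X_pow_mul, HahnSeries.coeff_add, HahnSeries.coeff_sub, coeff_coe_eulerDerivation,
    map_nsmul, HahnSeries.coeff_nsmul, Pi.smul_apply]
  simp only [nsmul_eq_mul]
  push_cast
  ring

theorem picardFuchsRecurrence_coeff {f : R⟦X⟧} (hf : picardFuchs X (eulerDerivation R) f = 0) :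
    PicardFuchsRecurrence (f : R⸨X⸩).coeff := fun n => by
  have h := coeff_coe_picardFuchs f (n + 1)
  rw [hf, PowerSeries.coe_zero, HahnSeries.coeff_zero,
    show (n + 1 - 1 : ℤ) = n by ring, show (n + 1 - 2 : ℤ) = n - 1 by ring,
    show (n + 1 - 3 : ℤ) = n - 2 by ring, show (n + 1 - 4 : ℤ) = n - 3 by ring] at h
  push_cast at h
  linear_combination -h

end Recurrence

theorem gamma1_7_infinity_integrality_general {R : Type*} [CommRing R] [IsAddTorsionFree R]
    {v : ℤ → R} (hv0 : v 0 = 1) (hvneg : ∀ j : ℤ, j < 0 → v j = 0)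
    (hv : PicardFuchsRecurrence v) (n : ℕ) : ∃ z : ℤ, v n = z := by
  obtain ⟨f, hf0, hf⟩ := exists_picardFuchs_eq_zero
  have hc : PicardFuchsRecurrence (Int.castRingHom R ∘ (f : ℤ⸨X⸩).coeff) :=
    (picardFuchsRecurrence_coeff hf).map (Int.castRingHom R)
  have hvc : v = Int.castRingHom R ∘ (f : ℤ⸨X⸩).coeff := by
    refine hv.unique hc fun j hj => ?_
    obtain rfl | hj := hj.eq_or_lt
    · simp [hv0, PowerSeries.coeff_coe, hf0]
    · simp [hvneg j hj, PowerSeries.coeff_coe, hj]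
  exact ⟨(f : ℤ⸨X⸩).coeff n, congrFun hvc n⟩

/-- The coefficients of the holomorphic Picard-Fuchs solution at infinity attached to `Γ₁(7)`
are integers: if `(n+1)^2 v_{n+1} = -(9n^2+9n+3) v_n - (13n^2+2) v_{n-1} - (2n-1)^2 v_{n-2}
+ (n-1)^2 v_{n-3}` with `v 0 = 1` and `v j = 0` for `j < 0`, then every `v n` is an integer. -/
theorem gamma1_7_infinity_integrality (v : ℤ → ℚ) (hv0 : v 0 = 1)
    (hvneg : ∀ j : ℤ, j < 0 → v j = 0)
    (hrec : ∀ n : ℕ, ((n : ℚ) + 1) ^ 2 * v ((n : ℤ) + 1) =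
      -(9 * (n : ℚ) ^ 2 + 9 * (n : ℚ) + 3) * v n - (13 * (n : ℚ) ^ 2 + 2) * v ((n : ℤ) - 1) -
      (2 * (n : ℚ) - 1) ^ 2 * v ((n : ℤ) - 2) + ((n : ℚ) - 1) ^ 2 * v ((n : ℤ) - 3)) :
    ∀ n : ℕ, ∃ z : ℤ, v n = z :=
  gamma1_7_infinity_integrality_general hv0 hvneg hrec
end

section
/- Let u_n be rational numbers satisfying (n+1)^2 u_{n+1} = 2^{20}(36n^2+68n+9) u_n − 2^{44}(76n^2+104n−123) u_{n-1} − 2^{71}(16n^2−48n+35) u_{n-2}, with u_0 = 1 and u_{-1} = u_{-2} = 0. Then u_n ∈ ℤ for all n, and moreover 2^{18n} divides u_n. -/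
/-!
Write `y² + 2xy = x³ + x² + tx + t` as `Y² = x²(x + 2) + t(x + 1)` and put `x = 8z`, `t = 2⁹z²τ`.
Then `dx / Y` is a constant multiple of `(1 + 4z + 4τ + 32zτ)^(-1/2) dz / z`, and `(1 + 4s)^(-1/2)`
has integer coefficients. The period `f(t)` is the residue of this form, so in
`f(t) = ∑ w n (2⁻⁹t)ⁿ` the number `w n` is the coefficient of `z^(2n) τ^n` in that series, hence an
integer. The given recurrence is that of `f(2²⁷t)`, so `u n = 2¹⁸ⁿ w n`.

The coefficients of the two-variable series are linked by first-order contiguity relations. These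
turn the pair of coefficients of `z^(2n) τ^n` and `z^(2n+1) τ^n` into the solution of a first-order
linear system, and eliminating the second entry yields the recurrence for `w`.
-/

section Contiguity

open PowerSeries

/-- The power series `(1 + 4X)^(-1/2)`. -/
noncomputable def invSqrtSeries : ℤ⟦X⟧ :=
  mk fun k => (-1) ^ k * (k.centralBinom : ℤ)

/-- The coefficient of `τ^n` in `(1 + 4X + 4τ + 4bXτ)^(-1/2)`, without the numerical factor
`(-1)^n * n.centralBinom`. -/
noncomputable def bilinearRow (b : ℤ) (n : ℕ) : ℤ⟦X⟧ :=
  (1 + C b * X) ^ n * invSqrtSeries ^ (2 * n + 1)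

/-- The coefficient of `z^m τ^n` in `(1 + 4z + 4τ + 4bzτ)^(-1/2)`. -/
noncomputable def bilinearCoeff (b : ℤ) (m n : ℕ) : ℤ :=
  (-1) ^ n * n.centralBinom * coeff m (bilinearRow b n)

lemma succ_mul_signed_centralBinom_succ (n : ℕ) :
    ((n : ℤ) + 1) * ((-1) ^ (n + 1) * (n + 1).centralBinom) =
      -2 * (2 * n + 1) * ((-1) ^ n * n.centralBinom) := by
  have h : ((n : ℤ) + 1) * (n + 1).centralBinom = 2 * (2 * n + 1) * n.centralBinom :=
    mod_cast n.succ_mul_centralBinom_succ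
  linear_combination (-1) ^ (n + 1) * h

lemma coeff_one_add_C_mul_X_mul_derivative {R : Type*} [CommSemiring R] (a : R) (f : R⟦X⟧) (m : ℕ) :
    coeff m ((1 + C a * X) * d⁄dX R f) = (m + 1) * coeff (m + 1) f + a * m * coeff m f := by
  rw [add_mul, one_mul, mul_assoc, map_add, coeff_C_mul, coeff_derivative]
  cases m with
  | zero =>
    rw [coeff_zero_X_mul]
    push_cast
    ring
  | succ m =>
    rw [coeff_succ_X_mul, coeff_derivative]
    push_cast
    ring

lemma one_add_C_four_mul_X_mul_derivative_invSqrtSeries :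
    (1 + C 4 * X) * d⁄dX ℤ invSqrtSeries = C (-2) * invSqrtSeries := by
  ext k
  rw [coeff_one_add_C_mul_X_mul_derivative, coeff_C_mul]
  simp only [invSqrtSeries, coeff_mk]
  linear_combination succ_mul_signed_centralBinom_succ k

lemma invSqrtSeries_sq_mul : invSqrtSeries ^ 2 * (1 + C 4 * X) = 1 := by
  apply derivative.ext
  · have h := one_add_C_four_mul_X_mul_derivative_invSqrtSeries
    have two_mul_C_neg_two : 2 * C (-2) + C 4 = (0 : ℤ⟦X⟧) := by
      rw [map_neg, map_ofNat, map_ofNat]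
      norm_num
    rw [Derivation.leibniz, Derivation.leibniz_pow, Derivation.map_one_eq_zero]
    simp only [smul_eq_mul, nsmul_eq_mul, map_add, Derivation.leibniz, Derivation.map_one_eq_zero,
      derivative_C, derivative_X]
    push_cast
    linear_combination 2 * invSqrtSeries * h + invSqrtSeries ^ 2 * two_mul_C_neg_two
  · simp [invSqrtSeries]

lemma derivative_invSqrtSeries : d⁄dX ℤ invSqrtSeries = C (-2) * invSqrtSeries ^ 3 := by
  linear_combination invSqrtSeries ^ 2 * one_add_C_four_mul_X_mul_derivative_invSqrtSeries -
    d⁄dX ℤ invSqrtSeries * invSqrtSeries_sq_mul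

lemma one_add_C_four_mul_X_mul_bilinearRow_succ (b : ℤ) (n : ℕ) :
    (1 + C 4 * X) * bilinearRow b (n + 1) = (1 + C b * X) * bilinearRow b n := by
  unfold bilinearRow
  linear_combination
    (1 + (C b : ℤ⟦X⟧) * X) ^ (n + 1) * invSqrtSeries ^ (2 * n + 1) * invSqrtSeries_sq_mul

lemma one_add_C_mul_X_mul_derivative_bilinearRow (b : ℤ) (n : ℕ) :
    (1 + C b * X) * d⁄dX ℤ (bilinearRow b n) =
      C (b * (n : ℤ)) * bilinearRow b n -
        C (2 * (2 * (n : ℤ) + 1)) * bilinearRow b (n + 1) := by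
  have derivative_linear : d⁄dX ℤ (1 + C b * X) = C b := by simp [Derivation.leibniz]
  have linear_pow : (1 + C b * X) * d⁄dX ℤ ((1 + C b * X) ^ n) =
      C b * (n : ℤ⟦X⟧) * (1 + C b * X) ^ n := by
    rw [derivative_pow, derivative_linear]
    cases n with
    | zero => simp
    | succ n => rw [Nat.add_sub_cancel]; ring
  have invSqrt_pow : d⁄dX ℤ (invSqrtSeries ^ (2 * n + 1)) =
      (2 * (n : ℤ⟦X⟧) + 1) * C (-2) * invSqrtSeries ^ (2 * n + 3) := by
    rw [derivative_pow, derivative_invSqrtSeries, Nat.add_sub_cancel]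
    push_cast
    ring
  simp only [bilinearRow, Derivation.leibniz, smul_eq_mul, invSqrt_pow, map_mul, map_add, map_neg,
    map_natCast, map_ofNat, map_one]
  linear_combination invSqrtSeries ^ (2 * n + 1) * linear_pow

lemma succ_mul_bilinearCoeff_succ_right (b : ℤ) (m n : ℕ) :
    ((n : ℤ) + 1) * bilinearCoeff b m (n + 1) =
      (m + 1) * bilinearCoeff b (m + 1) n + b * (m - n) * bilinearCoeff b m n := by
  have hrow : (m + 1) * coeff (m + 1) (bilinearRow b n) + b * m * coeff m (bilinearRow b n) =
      b * n * coeff m (bilinearRow b n) - 2 * (2 * n + 1) * coeff m (bilinearRow b (n + 1)) := by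
    have h := congrArg (coeff (R := ℤ) m) (one_add_C_mul_X_mul_derivative_bilinearRow b n)
    rw [coeff_one_add_C_mul_X_mul_derivative, map_sub, coeff_C_mul, coeff_C_mul] at h
    exact h
  unfold bilinearCoeff
  linear_combination coeff m (bilinearRow b (n + 1)) * succ_mul_signed_centralBinom_succ n -
    (-1) ^ n * n.centralBinom * hrow

lemma bilinearCoeff_square_relation (b : ℤ) (m n : ℕ) :
    ((n : ℤ) + 1) * (bilinearCoeff b (m + 1) (n + 1) + 4 * bilinearCoeff b m (n + 1)) +
      2 * (2 * n + 1) * (bilinearCoeff b (m + 1) n + b * bilinearCoeff b m n) = 0 := by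
  have hrow : coeff (m + 1) (bilinearRow b (n + 1)) + 4 * coeff m (bilinearRow b (n + 1)) =
      coeff (m + 1) (bilinearRow b n) + b * coeff m (bilinearRow b n) := by
    have h := congrArg (coeff (R := ℤ) (m + 1)) (one_add_C_four_mul_X_mul_bilinearRow_succ b n)
    simpa only [add_mul, one_mul, mul_assoc, map_add, coeff_C_mul, coeff_succ_X_mul] using h
  unfold bilinearCoeff
  linear_combination
    (coeff (m + 1) (bilinearRow b (n + 1)) + 4 * coeff m (bilinearRow b (n + 1))) *
      succ_mul_signed_centralBinom_succ n -
    2 * (2 * n + 1) * ((-1) ^ n * n.centralBinom) * hrow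

lemma bilinearCoeff_three_term_left (b : ℤ) (m n : ℕ) :
    ((m : ℤ) + 2) * bilinearCoeff b (m + 2) n +
      (b * (m + 1 - n) + 4 * m + 4 * n + 6) * bilinearCoeff b (m + 1) n +
      2 * b * (2 * m + 1) * bilinearCoeff b m n = 0 := by
  have h₁ := succ_mul_bilinearCoeff_succ_right b (m + 1) n
  push_cast at h₁
  linear_combination bilinearCoeff_square_relation b m n - h₁ -
    4 * succ_mul_bilinearCoeff_succ_right b m n

lemma bilinearCoeff_zero_right (b : ℤ) (m : ℕ) :
    bilinearCoeff b m 0 = (-1) ^ m * m.centralBinom := by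
  simp [bilinearCoeff, bilinearRow, invSqrtSeries]

end Contiguity

/-- The coefficient of `(2⁻⁹t)^n` in the holomorphic period of `y² + 2xy = x³ + x² + tx + t` at
`t = 0`, normalised to have constant term `1`. -/
noncomputable def periodCoeff (n : ℕ) : ℤ :=
  bilinearCoeff 8 (2 * n) n

/-- The neighbour of `periodCoeff n` completing it to a solution of a first-order system; the factor
`2 * n + 1` clears the denominators of that system. -/
noncomputable def periodCompanion (n : ℕ) : ℤ :=
  (2 * n + 1) * bilinearCoeff 8 (2 * n + 1) n

lemma periodCoeff_zero : periodCoeff 0 = 1 := by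
  simp [periodCoeff, bilinearCoeff_zero_right]

lemma periodCompanion_zero : periodCompanion 0 = -2 := by
  simp [periodCompanion, bilinearCoeff_zero_right, Nat.centralBinom]

lemma succ_mul_bilinearCoeff_below_diagonal (n : ℕ) :
    ((n : ℤ) + 1) * bilinearCoeff 8 (2 * n) (n + 1) =
      periodCompanion n + 8 * n * periodCoeff n := by
  have h := succ_mul_bilinearCoeff_succ_right 8 (2 * n) n
  push_cast at h
  unfold periodCompanion periodCoeff
  linear_combination h

lemma succ_mul_bilinearCoeff_near_diagonal (n : ℕ) :
    ((n : ℤ) + 1) * bilinearCoeff 8 (2 * n + 1) (n + 1) =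
      -6 * periodCompanion n - 16 * (4 * n + 1) * periodCoeff n := by
  have hbelow := succ_mul_bilinearCoeff_below_diagonal n
  have hsquare := bilinearCoeff_square_relation 8 (2 * n) n
  unfold periodCompanion periodCoeff at *
  linear_combination hsquare - 4 * hbelow

lemma sq_succ_mul_periodCoeff_succ (n : ℕ) :
    ((n : ℤ) + 1) ^ 2 * periodCoeff (n + 1) =
      2 * (14 * n + 11) * periodCompanion n + 16 * (4 * n + 1) * (6 * n + 5) * periodCoeff n := by
  have hrow : 2 * ((n : ℤ) + 1) * periodCoeff (n + 1) +
      10 * (2 * n + 1) * bilinearCoeff 8 (2 * n + 1) (n + 1) +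
      16 * (4 * n + 1) * bilinearCoeff 8 (2 * n) (n + 1) = 0 := by
    have h := bilinearCoeff_three_term_left 8 (2 * n) (n + 1)
    push_cast at h
    unfold periodCoeff
    rw [Nat.mul_succ]
    linear_combination h
  apply mul_left_cancel₀ (two_ne_zero (α := ℤ))
  linear_combination ((n : ℤ) + 1) * hrow -
    10 * (2 * n + 1) * succ_mul_bilinearCoeff_near_diagonal n -
    16 * (4 * n + 1) * succ_mul_bilinearCoeff_below_diagonal n

lemma sq_succ_mul_periodCompanion_succ (n : ℕ) :
    ((n : ℤ) + 1) ^ 2 * periodCompanion (n + 1) =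
      -4 * (44 * n ^ 2 + 96 * n + 49) * periodCompanion n -
        32 * (4 * n + 1) * (28 * n ^ 2 + 60 * n + 31) * periodCoeff n := by
  have hrow : periodCompanion (n + 1) + 2 * (10 * n + 11) * periodCoeff (n + 1) +
      16 * (4 * n + 3) * bilinearCoeff 8 (2 * n + 1) (n + 1) = 0 := by
    have h := bilinearCoeff_three_term_left 8 (2 * n + 1) (n + 1)
    push_cast at h
    unfold periodCompanion periodCoeff
    rw [Nat.mul_succ]
    push_cast
    linear_combination h
  linear_combination ((n : ℤ) + 1) ^ 2 * hrow -
    2 * (10 * n + 11) * sq_succ_mul_periodCoeff_succ n -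
    16 * (4 * n + 3) * (n + 1) * succ_mul_bilinearCoeff_near_diagonal n

lemma cast_add_one_sq_ne_zero {R : Type*} [Ring R] [IsDomain R] [CharZero R] (n : ℕ) :
    ((n : R) + 1) ^ 2 ≠ 0 :=
  pow_ne_zero 2 n.cast_add_one_ne_zero

-- These two combinations of the steps have a right-hand side divisible by `(n + 1) ^ 2`.
lemma periodCompanion_succ_elim (n : ℕ) :
    (14 * n + 11) * periodCompanion (n + 1) +
      2 * (44 * n ^ 2 + 96 * n + 49) * periodCoeff (n + 1) +
      2 ^ 10 * (4 * n + 1) * (4 * n + 3) * periodCoeff n = 0 := by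
  apply mul_left_cancel₀ (cast_add_one_sq_ne_zero (R := ℤ) n)
  linear_combination (14 * n + 11) * sq_succ_mul_periodCompanion_succ n +
    2 * (44 * n ^ 2 + 96 * n + 49) * sq_succ_mul_periodCoeff_succ n

lemma periodCompanion_succ_descent (n : ℕ) :
    (14 * n + 25) * periodCompanion (n + 1) +
      2 * (60 * n ^ 2 + 156 * n + 107) * periodCoeff (n + 1) =
    64 * (14 * n - 3) * periodCompanion n - 512 * (4 * n + 1) * (2 * n + 15) * periodCoeff n := by
  apply mul_left_cancel₀ (cast_add_one_sq_ne_zero (R := ℤ) n)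
  linear_combination (14 * n + 25) * sq_succ_mul_periodCompanion_succ n +
    2 * (60 * n ^ 2 + 156 * n + 107) * sq_succ_mul_periodCoeff_succ n

lemma periodCoeff_one : periodCoeff 1 = 36 := by
  have h := sq_succ_mul_periodCoeff_succ 0
  rw [periodCoeff_zero, periodCompanion_zero] at h
  simpa using h

lemma periodCompanion_one : periodCompanion 1 = -600 := by
  have h := sq_succ_mul_periodCompanion_succ 0
  rw [periodCoeff_zero, periodCompanion_zero] at h
  simpa using h

lemma periodCoeff_two : periodCoeff 2 = 420 := by
  have h := sq_succ_mul_periodCoeff_succ 1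
  rw [periodCoeff_one, periodCompanion_one] at h
  push_cast at h
  linarith

lemma periodCoeff_recurrence (n : ℕ) :
    ((n : ℤ) + 3) ^ 2 * periodCoeff (n + 3) =
      2 ^ 2 * (36 * ((n : ℤ) + 2) ^ 2 + 68 * (n + 2) + 9) * periodCoeff (n + 2) -
      2 ^ 8 * (76 * ((n : ℤ) + 2) ^ 2 + 104 * (n + 2) - 123) * periodCoeff (n + 1) -
      2 ^ 17 * (16 * ((n : ℤ) + 2) ^ 2 - 48 * (n + 2) + 35) * periodCoeff n := by
  have hstep := sq_succ_mul_periodCoeff_succ (n + 2)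
  have hdescent := periodCompanion_succ_descent (n + 1)
  have helim := periodCompanion_succ_elim n
  push_cast at hstep hdescent
  linear_combination hstep + 2 * hdescent + 128 * helim

theorem example_level_recurrence_general {R : Type*} [CommRing R] [IsDomain R] [CharZero R]
    (c : R) (u : ℤ → R) (huneg : ∀ j : ℤ, j < 0 → u j = 0)
    (hrec : ∀ n : ℕ, ((n : R) + 1) ^ 2 * u ((n : ℤ) + 1) =
      2 ^ 2 * c * (36 * (n : R) ^ 2 + 68 * (n : R) + 9) * u n -
      2 ^ 8 * c ^ 2 * (76 * (n : R) ^ 2 + 104 * (n : R) - 123) * u ((n : ℤ) - 1) -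
      2 ^ 17 * c ^ 3 * (16 * (n : R) ^ 2 - 48 * (n : R) + 35) * u ((n : ℤ) - 2)) (n : ℕ) :
    u n = c ^ n * periodCoeff n * u 0 := by
  induction n using Nat.strong_induction_on with
  | _ n ih =>
    match n, ih with
    | 0, _ => simp [periodCoeff_zero]
    | 1, _ =>
      have h₁ : u 1 = 2 ^ 2 * c * 9 * u 0 := by simpa [huneg] using hrec 0
      suffices u 1 = c * 36 * u 0 by simpa [periodCoeff_one] using this
      linear_combination h₁
    | 2, ih =>
      have h₁ : u 1 = c * 36 * u 0 := by simpa [periodCoeff_one] using ih 1 one_lt_two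
      have h₂ : 4 * u 2 = 452 * c * u 1 - 14592 * c ^ 2 * u 0 := by
        have h := hrec 1
        norm_num [huneg] at h
        linear_combination h
      suffices u 2 = c ^ 2 * 420 * u 0 by simpa [periodCoeff_two] using this
      apply mul_left_cancel₀ (OfNat.ofNat_ne_zero 4 : (4 : R) ≠ 0)
      linear_combination h₂ + 452 * c * h₁
    | k + 3, ih =>
      have h := hrec (k + 2)
      have hw := congrArg (Int.cast : ℤ → R) (periodCoeff_recurrence k)
      rw [show ((k + 2 : ℕ) : ℤ) + 1 = (k + 3 : ℕ) by push_cast; ring,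
        show ((k + 2 : ℕ) : ℤ) - 1 = (k + 1 : ℕ) by push_cast; ring,
        show ((k + 2 : ℕ) : ℤ) - 2 = (k : ℕ) by push_cast; ring,
        ih (k + 2) (by lia), ih (k + 1) (by lia), ih k (by lia)] at h
      apply mul_left_cancel₀ (cast_add_one_sq_ne_zero (R := R) (k + 2))
      push_cast at h hw ⊢
      linear_combination h - c ^ (k + 3) * u 0 * hw

/-- For the recurrence `(n+1)^2 u_{n+1} = 2^20 (36n^2+68n+9) u_n - 2^44 (76n^2+104n-123) u_{n-1}
- 2^71 (16n^2-48n+35) u_{n-2}` with `u 0 = 1` and `u j = 0` for `j < 0`, every `u n` is an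
integer divisible by `2^(18n)`. -/
theorem example_level_recurrence (u : ℤ → ℚ) (hu0 : u 0 = 1)
    (huneg : ∀ j : ℤ, j < 0 → u j = 0)
    (hrec : ∀ n : ℕ, ((n : ℚ) + 1) ^ 2 * u ((n : ℤ) + 1) =
      2 ^ 20 * (36 * (n : ℚ) ^ 2 + 68 * (n : ℚ) + 9) * u n -
      2 ^ 44 * (76 * (n : ℚ) ^ 2 + 104 * (n : ℚ) - 123) * u ((n : ℤ) - 1) -
      2 ^ 71 * (16 * (n : ℚ) ^ 2 - 48 * (n : ℚ) + 35) * u ((n : ℤ) - 2)) :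
    ∀ n : ℕ, ∃ z : ℤ, u n = z ∧ (2 : ℤ) ^ (18 * n) ∣ z := by
  have hclosed := example_level_recurrence_general (2 ^ 18) u huneg
    (fun n => by linear_combination hrec n)
  refine fun n => ⟨2 ^ (18 * n) * periodCoeff n, ?_, dvd_mul_right _ _⟩
  rw [hclosed, hu0, mul_one, ← pow_mul]
  push_cast
  rfl
end
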